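/- arXiv:1205.4889 — 2 statements merged into one kernel-verified Lean document; each statement's English description precedes it below -/
import Mathlib

section
/- Let d ≥ 0, let (σ_i)_{i∈Π} be a Nash equilibrium in the truncated game G^d and let ρ be its outcome. Assume ρ has a prefix αβγ, where β contains at least one vertex, such that Visit(α) = Visit(αβγ), last(α) = last(αβ), |αβ| ≤ l·|V| and |αβγ| = (l+1)·|V| for some l ≥ 1. Then there exists a finite-memory Nash equilibrium (τ_i)_{i∈Π} in the game G whose type equals Visit(α). -/
/-- A quantitative multiplayer reachability game: a finite directed graph whose
vertex set is partitioned among the players (via `owner`), with an initial vertex `v0`,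
an edge relation `E` such that every vertex has an outgoing edge, and a goal set
`goal i` for each player `i`. -/
structure ReachGame (P : Type) (V : Type) where
  owner : V → P
  v0 : V
  E : V → V → Prop
  total : ∀ v : V, ∃ w : V, E v w
  goal : P → Set V

namespace ReachGame

variable {P V : Type} [DecidableEq P] (G : ReachGame P V)

/-- The last vertex of a history (with default `v0`). -/
def lastV (h : List V) : V := h.getLastD G.v0

/-- A history: a nonempty finite path in the graph starting at `v0`. -/
def IsHistory (h : List V) : Prop :=
  h ≠ [] ∧ h.head? = some G.v0 ∧ List.Chain' G.E h

/-- A play: an infinite path starting at `v0`. -/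
def IsPlay (ρ : ℕ → V) : Prop :=
  ρ 0 = G.v0 ∧ ∀ k : ℕ, G.E (ρ k) (ρ (k + 1))

/-- `σ` is a (total encoding of a) strategy of player `i`: on every history ending in
a vertex owned by `i` it chooses a successor along an edge. -/
def IsStrategy (i : P) (σ : List V → V) : Prop :=
  ∀ h : List V, G.IsHistory h → G.owner (G.lastV h) = i → G.E (G.lastV h) (σ h)

/-- A strategy profile: one strategy per player. -/
def IsProfile (prof : P → List V → V) : Prop :=
  ∀ i : P, G.IsStrategy i (prof i)

/-- The history of length `n` (i.e. with `n` edges) obtained by letting the players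
follow the profile `prof` from `v0`. -/
def outHist (prof : P → List V → V) : ℕ → List V
  | 0 => [G.v0]
  | n + 1 => outHist prof n ++ [prof (G.owner (G.lastV (outHist prof n))) (outHist prof n)]

/-- The outcome play of the strategy profile `prof`. -/
def outcome (prof : P → List V → V) (n : ℕ) : V :=
  G.lastV (G.outHist prof n)

/-- The cost of player `i` for the play `ρ`: the least `l` with `ρ l ∈ goal i`,
and `⊤` (`+∞`) if there is no such `l`. -/
noncomputable def cost (i : P) (ρ : ℕ → V) : ℕ∞ :=
  sInf {n : ℕ∞ | ∃ l : ℕ, n = (l : ℕ∞) ∧ ρ l ∈ G.goal i}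

/-- Nash equilibrium: no player can strictly decrease his cost by a unilateral
deviation. -/
def IsNash (prof : P → List V → V) : Prop :=
  ∀ (j : P) (σ' : List V → V), G.IsStrategy j σ' →
    G.cost j (G.outcome prof) ≤ G.cost j (G.outcome (Function.update prof j σ'))

/-- `h ≈_σ h'` : the strategy `σ` of player `i` behaves the same after `h` and `h'`,
i.e. `σ (h ++ δ) = σ (h' ++ δ)` for every suffix `δ` making both `h ++ δ` and
`h' ++ δ` histories ending in a vertex of player `i`. -/
def MemEq (i : P) (σ : List V → V) (h h' : List V) : Prop :=
  ∀ δ : List V,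
    G.IsHistory (h ++ δ) → G.owner (G.lastV (h ++ δ)) = i →
    G.IsHistory (h' ++ δ) → G.owner (G.lastV (h' ++ δ)) = i →
    σ (h ++ δ) = σ (h' ++ δ)

/-- A strategy of player `i` is finite-memory if the relation `≈_σ` has finitely many
equivalence classes on histories, i.e. there is a finite set of histories meeting
every class. -/
def FiniteMemory (i : P) (σ : List V → V) : Prop :=
  ∃ S : Finset (List V), ∀ h : List V, G.IsHistory h →
    ∃ h' ∈ S, G.IsHistory h' ∧ G.MemEq i σ h h'

/-- A profile is finite-memory if each of its strategies is. -/
def FiniteMemoryProfile (prof : P → List V → V) : Prop :=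
  ∀ i : P, G.FiniteMemory i (prof i)

/-- `Visit h`: the set of players whose goal set is visited by the finite path `h`. -/
def visitL (h : List V) : Set P := {i : P | ∃ v ∈ h, v ∈ G.goal i}

/-- The type of a strategy profile: the set of players whose goal set is visited by
the outcome. -/
def typeOf (prof : P → List V → V) : Set P :=
  {i : P | ∃ l : ℕ, G.outcome prof l ∈ G.goal i}

/-! ### The truncated game `G^d` -/

/-- A strategy of player `i` in the truncated game `G^d` : it chooses a successor on
every history with less than `d` edges (list length `≤ d`) ending in a vertex of `i`. -/
def IsStrategyTrunc (d : ℕ) (i : P) (σ : List V → V) : Prop :=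
  ∀ h : List V, G.IsHistory h → h.length ≤ d → G.owner (G.lastV h) = i →
    G.E (G.lastV h) (σ h)

/-- A strategy profile of the truncated game `G^d`. -/
def IsProfileTrunc (d : ℕ) (prof : P → List V → V) : Prop :=
  ∀ i : P, G.IsStrategyTrunc d i (prof i)

/-- The cost of player `i` for a finite play `h` (a list of vertices): the least
position of `h` lying in `goal i`, and `⊤` if `goal i` is not visited. -/
noncomputable def costList (i : P) (h : List V) : ℕ∞ :=
  sInf {n : ℕ∞ | ∃ l : ℕ, n = (l : ℕ∞) ∧ l < h.length ∧ h.getD l G.v0 ∈ G.goal i}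

/-- Nash equilibrium of the truncated game `G^d` (whose plays are the histories with
exactly `d` edges). -/
def IsNashTrunc (d : ℕ) (prof : P → List V → V) : Prop :=
  ∀ (j : P) (σ' : List V → V), G.IsStrategyTrunc d j σ' →
    G.costList j (G.outHist prof d) ≤
      G.costList j (G.outHist (Function.update prof j σ') d)

/-- The type of a strategy profile of the truncated game `G^d`. -/
def typeOfTrunc (d : ℕ) (prof : P → List V → V) : Set P :=
  G.visitL (G.outHist prof d)

end ReachGame

namespace ReachGame

section aux
variable {P V : Type} [DecidableEq P] (G : ReachGame P V)

theorem aux_outHist_length (prof : P → List V → V) (n : ℕ) :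
    (G.outHist prof n).length = n + 1 := by
  induction n with
  | zero => rfl
  | succ n ih => simp [outHist, ih]

theorem aux_lastV_append (h : List V) (v : V) : G.lastV (h ++ [v]) = v := by
  simp [lastV]

theorem aux_outcome_succ (prof : P → List V → V) (n : ℕ) :
    G.outcome prof (n + 1) = prof (G.owner (G.outcome prof n)) (G.outHist prof n) := by
  simp only [outcome, outHist, aux_lastV_append]

theorem aux_outHist_succ (prof : P → List V → V) (n : ℕ) :
    G.outHist prof (n + 1) = G.outHist prof n ++ [G.outcome prof (n + 1)] := by
  rw [aux_outcome_succ]; rfl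

theorem aux_outHist_eq (prof : P → List V → V) (n : ℕ) :
    G.outHist prof n = (List.range (n + 1)).map (G.outcome prof) := by
  induction n with
  | zero => rfl
  | succ n ih =>
    rw [aux_outHist_succ, ih, List.range_succ (n := n + 1)]; simp

theorem aux_prefix (prof : P → List V → V) (d : ℕ) (L : List V) (hL : L ≠ [])
    (h : L <+: G.outHist prof d) : L = G.outHist prof (L.length - 1) ∧ L.length - 1 ≤ d := by
  have hlen := h.length_le
  rw [aux_outHist_length] at hlen
  have hp : 0 < L.length := List.length_pos_iff.mpr hL
  refine ⟨?_, by omega⟩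
  have h1 := List.prefix_iff_eq_take.mp h
  rw [aux_outHist_eq] at h1 ⊢
  rw [← List.map_take, List.take_range] at h1
  rw [min_eq_left (by omega)] at h1
  rw [Nat.sub_add_cancel hp]
  exact h1

theorem aux_visit (prof : P → List V → V) (n : ℕ) (i : P) :
    i ∈ G.visitL (G.outHist prof n) ↔ ∃ k ≤ n, G.outcome prof k ∈ G.goal i := by
  rw [aux_outHist_eq]
  simp only [visitL, Set.mem_setOf_eq, List.mem_map, List.mem_range]
  constructor
  · rintro ⟨v, ⟨k, hk, rfl⟩, hv⟩
    exact ⟨k, by omega, hv⟩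
  · rintro ⟨k, hk, hv⟩
    exact ⟨_, ⟨k, by omega, rfl⟩, hv⟩

theorem aux_isHistory_append (h : List V) (v : V) (hh : G.IsHistory h)
    (hE : G.E (G.lastV h) v) : G.IsHistory (h ++ [v]) := by
  obtain ⟨h1, h2, h3⟩ := hh
  refine ⟨by simp, ?_, ?_⟩
  · rw [List.head?_append, h2]; rfl
  · refine List.isChain_append.mpr ⟨h3, by simp, ?_⟩
    intro x hx y hy
    simp at hy
    subst hy
    have : G.lastV h = x := by
      simp only [lastV, List.getLastD_eq_getLast?]
      rw [Option.mem_def.mp hx]; rfl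
    rw [← this]; exact hE

theorem aux_outHist_isHistory (d : ℕ) (prof : P → List V → V) (hp : G.IsProfileTrunc d prof)
    (n : ℕ) (hn : n ≤ d) : G.IsHistory (G.outHist prof n) := by
  induction n with
  | zero => exact ⟨by simp [outHist], rfl, List.isChain_singleton _⟩
  | succ n ih =>
    have h := ih (by omega)
    apply aux_isHistory_append _ _ _ h
    exact hp _ _ h (by rw [aux_outHist_length]; omega) rfl

theorem aux_outcome_edge (d : ℕ) (prof : P → List V → V) (hp : G.IsProfileTrunc d prof)
    (n : ℕ) (hn : n < d) : G.E (G.outcome prof n) (G.outcome prof (n + 1)) := by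
  rw [aux_outcome_succ]
  exact hp _ _ (aux_outHist_isHistory G d prof hp n hn.le)
    (by rw [aux_outHist_length]; omega) rfl

/-- The vertices from which player `j` can force a visit to his goal in at most `m` steps. -/
def auxR (j : P) : ℕ → Set V
  | 0 => G.goal j
  | m + 1 => {v | v ∈ G.goal j ∨ (G.owner v = j ∧ ∃ w, G.E v w ∧ w ∈ auxR j m) ∨
      (G.owner v ≠ j ∧ ∀ w, G.E v w → w ∈ auxR j m)}

theorem auxR_goal (j : P) (m : ℕ) : G.goal j ⊆ G.auxR j m := by
  intro v hv
  cases m with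
  | zero => exact hv
  | succ m => exact Or.inl hv

theorem auxR_mono_succ (j : P) (m : ℕ) : G.auxR j m ⊆ G.auxR j (m + 1) := by
  induction m with
  | zero => exact auxR_goal G j 1
  | succ m ih =>
    rintro v (h | ⟨h, w, hw, hw'⟩ | ⟨h, hw⟩)
    · exact Or.inl h
    · exact Or.inr (Or.inl ⟨h, w, hw, ih hw'⟩)
    · exact Or.inr (Or.inr ⟨h, fun w hE => ih (hw w hE)⟩)

theorem auxR_mono (j : P) : Monotone (G.auxR j) :=
  monotone_nat_of_le_succ (auxR_mono_succ G j)

theorem auxR_congr (j : P) (m n : ℕ) (h : G.auxR j m = G.auxR j n) :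
    G.auxR j (m + 1) = G.auxR j (n + 1) := by
  simp only [auxR, h]

theorem auxR_stab [Fintype V] (j : P) (m : ℕ) : G.auxR j m ⊆ G.auxR j (Fintype.card V) := by
  rcases le_total m (Fintype.card V) with h | h
  · exact auxR_mono G j h
  · have key : (G.auxR j m).ncard = (G.auxR j (Fintype.card V)).ncard := by
      refine Nat.stabilises_of_monotone (f := fun m => (G.auxR j m).ncard) ?_ ?_ ?_ h
      · intro a b hab
        exact Set.ncard_le_ncard (auxR_mono G j hab) (Set.toFinite _)
      · intro m
        rw [← Nat.card_eq_fintype_card, ← Set.ncard_univ]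
        exact Set.ncard_le_ncard (Set.subset_univ _) (Set.toFinite _)
      · intro m hm
        have : G.auxR j m = G.auxR j (m + 1) :=
          Set.eq_of_subset_of_ncard_le (auxR_mono_succ G j m) (le_of_eq hm.symm) (Set.toFinite _)
        rw [auxR_congr G j _ _ this]
    exact (Set.eq_of_subset_of_ncard_le (auxR_mono G j h) (le_of_eq key) (Set.toFinite _)).ge

/-- Positional punishing strategy against `j`. -/
theorem aux_punish [Fintype V] (j : P) : ∃ s : V → V, (∀ v, G.E v (s v)) ∧
    ∀ v m, G.owner v ≠ j → v ∉ G.auxR j (m + 1) → s v ∉ G.auxR j m := by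
  classical
  let r : V → ℕ∞ := fun w => sInf {n : ℕ∞ | ∃ l : ℕ, n = (l : ℕ∞) ∧ w ∈ G.auxR j l}
  have hr : ∀ w m, w ∈ G.auxR j m ↔ r w ≤ m := by
    intro w m
    constructor
    · intro h
      exact sInf_le ⟨m, rfl, h⟩
    · intro h
      have hne : {n : ℕ∞ | ∃ l : ℕ, n = (l : ℕ∞) ∧ w ∈ G.auxR j l}.Nonempty := by
        by_contra hne
        rw [Set.not_nonempty_iff_eq_empty] at hne
        simp [r, hne] at h
      obtain ⟨l, hl, hw⟩ := csInf_mem hne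
      have : (l : ℕ∞) ≤ m := by rw [← hl]; exact h
      exact auxR_mono G j (by exact_mod_cast this) hw
  have hmax : ∀ v, ∃ w, G.E v w ∧ ∀ w', G.E v w' → r w' ≤ r w := by
    intro v
    obtain ⟨w, hw, hw'⟩ := Set.exists_max_image {w | G.E v w} r (Set.toFinite _) (G.total v)
    exact ⟨w, hw, hw'⟩
  choose s hs hs' using hmax
  refine ⟨s, hs, ?_⟩
  intro v m ho hv hsv
  apply hv
  refine Or.inr (Or.inr ⟨ho, fun w hw => ?_⟩)
  rw [hr] at hsv ⊢
  exact (hs' v w hw).trans hsv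

/-- Deviation lemma in the truncated game. -/
theorem aux_trunc (d : ℕ) (prof : P → List V → V)
    (hprof : G.IsProfileTrunc d prof) (hnash : G.IsNashTrunc d prof) (j : P) (k m : ℕ)
    (hkm : k + m ≤ d) (hk : G.outcome prof k ∈ G.auxR j m) :
    ∃ i ≤ k + m, G.outcome prof i ∈ G.goal j := by
  classical
  have hg : ∀ h : List V, ∃ w, G.E (G.lastV h) w ∧
      ((∃ w', G.E (G.lastV h) w' ∧ w' ∈ G.auxR j (k + m - h.length)) →
        w ∈ G.auxR j (k + m - h.length)) := by
    intro h
    by_cases hw : ∃ w', G.E (G.lastV h) w' ∧ w' ∈ G.auxR j (k + m - h.length)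
    · obtain ⟨w, h1, h2⟩ := hw
      exact ⟨w, h1, fun _ => h2⟩
    · obtain ⟨w, h1⟩ := G.total (G.lastV h)
      exact ⟨w, h1, fun h => absurd h hw⟩
  choose g hgE hgR using hg
  let σ' : List V → V := fun h => if h.length ≤ k then prof j h else g h
  have hσ' : G.IsStrategyTrunc d j σ' := by
    intro h hh hl ho
    by_cases hk : h.length ≤ k
    · simp only [σ', if_pos hk]; exact hprof j h hh hl ho
    · simp only [σ', if_neg hk]; exact hgE h
  set q := Function.update prof j σ' with hq
  have hqp : G.IsProfileTrunc d q := by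
    intro i
    by_cases hi : i = j
    · subst hi; simpa [hq] using hσ'
    · simpa [hq, Function.update_of_ne hi] using hprof i
  have hsame : ∀ n ≤ k, G.outHist q n = G.outHist prof n := by
    intro n hn
    induction n with
    | zero => rfl
    | succ n ih =>
      simp only [outHist]
      rw [ih (by omega)]
      congr 2
      by_cases hi : G.owner (G.lastV (G.outHist prof n)) = j
      · rw [hi, hq, Function.update_self]
        simp only [σ', aux_outHist_length, if_pos hn]
      · rw [hq, Function.update_of_ne hi]
  have hinv : ∀ t ≤ m, (∃ i ≤ k + t, G.outcome q i ∈ G.goal j) ∨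
      G.outcome q (k + t) ∈ G.auxR j (m - t) := by
    intro t ht
    induction t with
    | zero =>
      right
      simpa [outcome, hsame k le_rfl] using hk
    | succ t ih =>
      rcases ih (by omega) with ⟨i, hi, h⟩ | h
      · exact Or.inl ⟨i, by omega, h⟩
      · have e : m - t = (m - (t + 1)) + 1 := by omega
        have e2 : k + m - (k + t + 1) = m - (t + 1) := by omega
        rw [e] at h
        rcases h with h | ⟨ho, w, hw, hw'⟩ | ⟨ho, h⟩
        · exact Or.inl ⟨k + t, by omega, h⟩
        · right
          rw [← add_assoc, aux_outcome_succ, ho, hq, Function.update_self]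
          have := hgR (G.outHist q (k + t))
          rw [aux_outHist_length, e2] at this
          simp only [σ', aux_outHist_length]
          rw [if_neg (by omega)]
          exact this ⟨w, hw, hw'⟩
        · right
          exact h _ (aux_outcome_edge G d q hqp (k + t) (by omega))
  have hhit : ∃ i ≤ k + m, G.outcome q i ∈ G.goal j := by
    rcases hinv m le_rfl with h | h
    · exact h
    · rw [Nat.sub_self] at h
      exact ⟨_, le_rfl, h⟩
  have hgetD : ∀ (p : P → List V → V) (i : ℕ), i < d + 1 →
      (G.outHist p d).getD i G.v0 = G.outcome p i := by
    intro p i hi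
    rw [aux_outHist_eq]
    simp [List.getD_eq_getElem?_getD, hi]
  obtain ⟨i, hi, hgoal⟩ := hhit
  have h1 : G.costList j (G.outHist q d) ≤ (i : ℕ∞) := by
    refine sInf_le ⟨i, rfl, by rw [aux_outHist_length]; omega, ?_⟩
    rw [hgetD _ _ (by omega)]; exact hgoal
  have h2 := (hnash j σ' hσ').trans h1
  have hne : {n : ℕ∞ | ∃ l : ℕ, n = (l : ℕ∞) ∧ l < (G.outHist prof d).length ∧
      (G.outHist prof d).getD l G.v0 ∈ G.goal j}.Nonempty := by
    by_contra hne
    rw [Set.not_nonempty_iff_eq_empty] at hne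
    rw [costList, hne] at h2
    simp at h2
  obtain ⟨x, hx, hxl, hxg⟩ := csInf_mem hne
  rw [aux_outHist_length] at hxl
  rw [hgetD _ _ hxl] at hxg
  have : (x : ℕ∞) ≤ i := by rw [← hx]; exact h2
  have : x ≤ i := by exact_mod_cast this
  exact ⟨x, by omega, hxg⟩

theorem aux_finiteMemory {M : Type} [Finite M] (i : P) (σ : List V → V) (mem : List V → M)
    (step : M → V → M) (out : M → V) (hσ : ∀ h, σ h = out (mem h))
    (hmem : ∀ h δ, h ≠ [] → mem (h ++ δ) = δ.foldl step (mem h)) : G.FiniteMemory i σ := by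
  classical
  let rep : M → List V := fun x =>
    if hx : ∃ h, G.IsHistory h ∧ mem h = x then hx.choose else []
  refine ⟨(Set.toFinite (Set.range rep)).toFinset, fun h hh => ?_⟩
  have hx : ∃ h', G.IsHistory h' ∧ mem h' = mem h := ⟨h, hh, rfl⟩
  have hr : rep (mem h) = hx.choose := dif_pos hx
  refine ⟨rep (mem h), by simp, ?_, ?_⟩
  · rw [hr]; exact hx.choose_spec.1
  · intro δ _ _ _ _
    have h1 : rep (mem h) ≠ [] := by rw [hr]; exact hx.choose_spec.1.1
    rw [hσ, hσ, hmem _ _ hh.1, hmem _ _ h1]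
    rw [hr, hx.choose_spec.2]

/-- The lasso Nash equilibrium. -/
theorem aux_lasso [Fintype P] [Fintype V] (a b : ℕ) (hab : a < b) (ρ : ℕ → V)
    (h0 : ρ 0 = G.v0) (hE : ∀ k < b, G.E (ρ k) (ρ (k + 1))) (hloop : ρ a = ρ b)
    (hgood : ∀ j k n, k < b → k ≤ n → ρ k ∈ G.auxR j (n - k) →
      ∃ i ≤ n, i < b ∧ ρ i ∈ G.goal j)
    (hsafe : ∀ j k m, k < b → ρ k ∈ G.auxR j m → ∃ i ≤ a, ρ i ∈ G.goal j) :
    ∃ τ : P → List V → V, G.IsProfile τ ∧ G.FiniteMemoryProfile τ ∧ G.IsNash τ ∧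
      G.typeOf τ = {j | ∃ i ≤ a, ρ i ∈ G.goal j} := by
  classical
  choose s hsE hsR using fun j => aux_punish G j
  let nx : Fin b → Fin b := fun k => if h : k.1 + 1 < b then ⟨k.1 + 1, h⟩ else ⟨a, hab⟩
  have hnxE : ∀ k : Fin b, G.E (ρ k) (ρ (nx k)) := by
    intro k
    by_cases h : k.1 + 1 < b
    · simp only [nx, dif_pos h]; exact hE k k.2
    · simp only [nx, dif_neg h]
      have : k.1 + 1 = b := by have := k.2; omega
      have h2 := hE k k.2
      rw [this] at h2
      rw [hloop]; exact h2
  let step : (Fin b ⊕ P) × V → V → (Fin b ⊕ P) × V := fun x w =>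
    match x with
    | (Sum.inl k, v) => if w = ρ (nx k) then (Sum.inl (nx k), w) else (Sum.inr (G.owner v), w)
    | (Sum.inr j, _) => (Sum.inr j, w)
  let out : (Fin b ⊕ P) × V → V := fun x =>
    match x with
    | (Sum.inl k, _) => ρ (nx k)
    | (Sum.inr j, v) => s j v
  let z : Fin b := ⟨0, by omega⟩
  let mem : List V → (Fin b ⊕ P) × V := fun h => h.tail.foldl step (Sum.inl z, G.v0)
  have hmem : ∀ h δ, h ≠ [] → mem (h ++ δ) = δ.foldl step (mem h) := by
    intro h δ hh
    simp only [mem]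
    rw [List.tail_append_of_ne_nil hh, List.foldl_append]
  have hstep2 : ∀ x w, (step x w).2 = w := by
    rintro ⟨k | j, v⟩ w
    · simp only [step]; split_ifs <;> rfl
    · rfl
  have hmem2 : ∀ t : List V, (mem (G.v0 :: t)).2 = G.lastV (G.v0 :: t) ∧
      ∀ k, (mem (G.v0 :: t)).1 = Sum.inl k → G.lastV (G.v0 :: t) = ρ k := by
    intro t
    induction t using List.reverseRecOn with
    | nil =>
      refine ⟨rfl, ?_⟩
      intro k hk
      have : z = k := Sum.inl_injective hk
      subst this
      exact h0.symm
    | append_singleton t w ih =>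
      rw [← List.cons_append, hmem _ _ (by simp), aux_lastV_append]
      simp only [List.foldl_cons, List.foldl_nil]
      refine ⟨hstep2 _ _, ?_⟩
      intro k hk
      rcases hm : mem (G.v0 :: t) with ⟨k' | j, v⟩
      · rw [hm] at hk
        simp only [step] at hk
        split_ifs at hk with hw
        · have : nx k' = k := Sum.inl_injective hk
          rw [← this, hw]
      · rw [hm] at hk
        simp [step] at hk
  let τ : P → List V → V := fun _ h => out (mem h)
  have hτE : ∀ h, G.IsHistory h → G.E (G.lastV h) (out (mem h)) := by
    intro h hh
    obtain ⟨h1, h2, h3⟩ := hh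
    cases h with
    | nil => exact absurd rfl h1
    | cons v t =>
      have : v = G.v0 := by simpa using h2
      subst this
      obtain ⟨e1, e2⟩ := hmem2 t
      rcases hm : mem (G.v0 :: t) with ⟨k' | j, v⟩
      · rw [hm] at e2
        rw [e2 k' rfl]
        exact hnxE k'
      · rw [hm] at e1
        rw [← e1]
        exact hsE j v
  have hτP : G.IsProfile τ := fun i h hh _ => hτE h hh
  -- position on the lasso
  let p : ℕ → Fin b := fun n => nx^[n] z
  have hp0 : p 0 = z := rfl
  have hps : ∀ n, p (n + 1) = nx (p n) := fun n => Function.iterate_succ_apply' _ _ _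
  have hple : ∀ n, (p n).1 ≤ n := by
    intro n
    induction n with
    | zero => exact le_rfl
    | succ n ih =>
      rw [hps]
      by_cases h : (p n).1 + 1 < b
      · simp only [nx, dif_pos h]; omega
      · simp only [nx, dif_neg h]; have := (p n).2; omega
  have hpeq : ∀ n < b, (p n).1 = n := by
    intro n hn
    induction n with
    | zero => rfl
    | succ n ih =>
      have ih := ih (by omega)
      rw [hps]
      have h : (p n).1 + 1 < b := by omega
      simp only [nx, dif_pos h]; omega
  have hmemS : ∀ (q : P → List V → V) n, mem (G.outHist q (n + 1)) =
      step (mem (G.outHist q n)) (G.outcome q (n + 1)) := by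
    intro q n
    rw [aux_outHist_succ, hmem]
    · rfl
    · rw [← List.length_pos_iff, aux_outHist_length]; omega
  have hout : ∀ n, mem (G.outHist τ n) = (Sum.inl (p n), ρ (p n)) ∧
      G.outcome τ n = ρ (p n) := by
    intro n
    induction n with
    | zero =>
      refine ⟨?_, h0.symm⟩
      show (Sum.inl z, G.v0) = (Sum.inl z, ρ 0)
      rw [h0]
    | succ n ih =>
      have h1 : G.outcome τ (n + 1) = ρ (p (n + 1)) := by
        rw [aux_outcome_succ]
        show out (mem (G.outHist τ n)) = _
        rw [ih.1, hps]
      refine ⟨?_, h1⟩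
      rw [hmemS, ih.1, h1, hps]
      simp [step]
  refine ⟨τ, hτP, ?_, ?_, ?_⟩
  · intro i
    exact aux_finiteMemory G i _ mem step out (fun _ => rfl) hmem
  · intro j σ' hσ'
    refine le_sInf ?_
    rintro _ ⟨n, rfl, hn⟩
    by_contra hlt
    have hno : ∀ i ≤ n, G.outcome τ i ∉ G.goal j := by
      intro i hi hg
      apply hlt
      have : G.cost j (G.outcome τ) ≤ (i : ℕ∞) := sInf_le ⟨i, rfl, hg⟩
      exact this.trans (by exact_mod_cast hi)
    have hno' : ∀ i ≤ n, i < b → ρ i ∉ G.goal j := by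
      intro i hi hib
      have := hno i hi
      rwa [(hout i).2, hpeq i hib] at this
    -- lasso vertices are not winning fast enough
    have hK : ∀ k ≤ n, ρ (p k) ∉ G.auxR j (n - k) := by
      intro k hk hR
      by_cases hkb : k < b
      · rw [hpeq k hkb] at hR
        obtain ⟨i, hi, hib, hg⟩ := hgood j k n hkb hk hR
        exact hno' i hi hib hg
      · obtain ⟨i, hi, hg⟩ := hsafe j (p k) _ (p k).2 hR
        exact hno' i (by omega) (by omega) hg
    set q := Function.update τ j σ' with hq
    have hqP : G.IsProfile q := by
      intro i
      by_cases hi : i = j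
      · subst hi; simpa [hq] using hσ'
      · simpa [hq, Function.update_of_ne hi] using hτP i
    have hqE : ∀ t, G.E (G.outcome q t) (G.outcome q (t + 1)) := fun t =>
      aux_outcome_edge G (t + 1) q (fun i h hh _ ho => hqP i h hh ho) t (by omega)
    have hinv : ∀ t ≤ n, G.outcome q t ∉ G.auxR j (n - t) ∧
        (mem (G.outHist q t) = (Sum.inl (p t), G.outcome q t) ∨
          mem (G.outHist q t) = (Sum.inr j, G.outcome q t)) := by
      intro t ht
      induction t with
      | zero =>
        refine ⟨?_, Or.inl rfl⟩
        have := hK 0 (by omega)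
        rw [hpeq 0 (by omega), h0] at this
        exact this
      | succ t ih =>
        obtain ⟨hR, hm⟩ := ih (by omega)
        have e : n - t = (n - (t + 1)) + 1 := by omega
        rw [e] at hR
        have hj : G.owner (G.outcome q t) = j → G.outcome q (t + 1) ∉ G.auxR j (n - (t + 1)) :=
          fun ho hin => hR (Or.inr (Or.inl ⟨ho, _, hqE t, hin⟩))
        have hnj : G.owner (G.outcome q t) ≠ j →
            G.outcome q (t + 1) = out (mem (G.outHist q t)) := by
          intro ho
          rw [aux_outcome_succ, hq, Function.update_of_ne ho]
        rcases hm with hm | hm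
        · rw [hmemS, hm]
          by_cases hw : G.outcome q (t + 1) = ρ (nx (p t))
          · refine ⟨?_, Or.inl ?_⟩
            · have := hK (t + 1) ht
              rw [hps] at this
              rw [hw]; exact this
            · simp only [step, if_pos hw, hps]
          · have ho : G.owner (G.outcome q t) = j := by
              by_contra ho
              apply hw
              rw [hnj ho, hm]
            refine ⟨hj ho, Or.inr ?_⟩
            simp only [step, if_neg hw, ho]
        · refine ⟨?_, Or.inr ?_⟩
          · by_cases ho : G.owner (G.outcome q t) = j
            · exact hj ho
            · rw [hnj ho, hm]
              exact hsR j _ _ ho hR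
          · rw [hmemS, hm]
    have := (hinv n le_rfl).1
    rw [Nat.sub_self] at this
    exact this hn
  · ext j
    simp only [typeOf, Set.mem_setOf_eq]
    constructor
    · rintro ⟨n, hn⟩
      rw [(hout n).2] at hn
      exact hsafe j (p n) 0 (p n).2 hn
    · rintro ⟨i, hi, hg⟩
      refine ⟨i, ?_⟩
      rw [(hout i).2, hpeq i (by omega)]
      exact hg

end aux

end ReachGame

/-- Let `(σᵢ)` be a Nash equilibrium of the truncated game `G^d` whose
outcome has a prefix `αβγ` (with `β` nonempty) such that `Visit(α) = Visit(αβγ)`,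
`last(α) = last(αβ)`, `|αβ| ≤ l·|V|` and `|αβγ| = (l+1)·|V|` for some `l ≥ 1`
(lengths counted in edges).  Then the game `G` has a finite-memory Nash equilibrium
`(τᵢ)` whose type equals `Visit(α)`. -/
theorem finiteMemory_nash_of_trunc_nash {P V : Type} [Fintype P] [DecidableEq P] [Fintype V]
    (G : ReachGame P V) (d : ℕ)
    (prof : P → List V → V)
    (hprof : G.IsProfileTrunc d prof) (hnash : G.IsNashTrunc d prof)
    (α β γ rest : List V) (hα : α ≠ []) (hβ : β ≠ [])
    (hdecomp : G.outHist prof d = α ++ β ++ γ ++ rest)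
    (hvisit : G.visitL α = G.visitL (α ++ β ++ γ))
    (hlast : G.lastV α = G.lastV (α ++ β))
    (l : ℕ) (hl : 1 ≤ l)
    (hlen1 : (α ++ β).length - 1 ≤ l * Fintype.card V)
    (hlen2 : (α ++ β ++ γ).length - 1 = (l + 1) * Fintype.card V) :
    ∃ τ : P → List V → V,
      G.IsProfile τ ∧ G.FiniteMemoryProfile τ ∧ G.IsNash τ ∧
      G.typeOf τ = G.visitL α := by
  obtain ⟨ea, had⟩ := ReachGame.aux_prefix G prof d α hα ⟨β ++ γ ++ rest, by simp [hdecomp]⟩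
  obtain ⟨eb, hbd⟩ := ReachGame.aux_prefix G prof d (α ++ β) (by simp [hα])
    ⟨γ ++ rest, by simp [hdecomp]⟩
  obtain ⟨ec, hcd⟩ := ReachGame.aux_prefix G prof d (α ++ β ++ γ) (by simp [hα])
    ⟨rest, by simp [hdecomp]⟩
  have hab : α.length - 1 < (α ++ β).length - 1 := by
    have h1 := List.length_pos_iff.mpr hα
    have h2 := List.length_pos_iff.mpr hβ
    rw [List.length_append]; omega
  have hbc : (l + 1) * Fintype.card V = l * Fintype.card V + Fintype.card V := by ring
  generalize (α ++ β ++ γ).length - 1 = c at *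
  generalize (α ++ β).length - 1 = b at *
  generalize α.length - 1 = a at *
  rw [ec, ea] at hvisit
  rw [eb, ea] at hlast
  rw [ea]
  have hv : ∀ j, (∃ k ≤ a, G.outcome prof k ∈ G.goal j) ↔
      ∃ k ≤ c, G.outcome prof k ∈ G.goal j := by
    intro j
    rw [← ReachGame.aux_visit, ← ReachGame.aux_visit, hvisit]
  have hsafe : ∀ j k m, k < b → G.outcome prof k ∈ G.auxR j m →
      ∃ i ≤ a, G.outcome prof i ∈ G.goal j := by
    intro j k m hk hR
    rw [hv]
    obtain ⟨i, hi, hg⟩ := ReachGame.aux_trunc G d prof hprof hnash j k (Fintype.card V)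
      (by omega) (ReachGame.auxR_stab G j m hR)
    exact ⟨i, by omega, hg⟩
  have hgood : ∀ j k n, k < b → k ≤ n → G.outcome prof k ∈ G.auxR j (n - k) →
      ∃ i ≤ n, i < b ∧ G.outcome prof i ∈ G.goal j := by
    intro j k n hk hkn hR
    obtain ⟨i, hi, hg⟩ := hsafe j k _ hk hR
    by_cases hin : i ≤ n
    · exact ⟨i, hin, by omega, hg⟩
    · obtain ⟨i', hi', hg'⟩ := ReachGame.aux_trunc G d prof hprof hnash j k (n - k)
        (by omega) hR
      exact ⟨i', by omega, by omega, hg'⟩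
  obtain ⟨τ, h1, h2, h3, h4⟩ := ReachGame.aux_lasso G a b hab (G.outcome prof) rfl
    (fun k hk => ReachGame.aux_outcome_edge G d prof hprof k (by omega)) hlast hgood hsafe
  refine ⟨τ, h1, h2, h3, ?_⟩
  rw [h4]
  ext j
  rw [ReachGame.aux_visit]
  rfl
end

section
/- Let (σ_i)_{i∈Π} be a strategy profile in a quantitative multiplayer reachability game G with outcome ρ = λλ'ρ̄, where λ' contains at least one vertex, Visit(λ) = Visit(λλ') and last(λ) = last(λλ'). Then there exists a strategy profile (τ_i)_{i∈Π} with outcome λρ̄ such that whenever some player j has a profitable deviation with respect to (τ_i)_{i∈Π}, player j also has a profitable deviation with respect to (σ_i)_{i∈Π}. -/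
namespace ReachGame

theorem outHist_length {P V : Type} (G : ReachGame P V) (A : P → List V → V) (n : ℕ) :
    (G.outHist A n).length = n + 1 := by
  induction n with
  | zero => simp [outHist]
  | succ n ih => simp [outHist, ih]

theorem outHist_ne {P V : Type} (G : ReachGame P V) (A : P → List V → V) (n : ℕ) :
    G.outHist A n ≠ [] := by
  intro h
  have := G.outHist_length A n
  simp [h] at this

theorem lastV_concat {P V : Type} (G : ReachGame P V) (h : List V) (v : V) :
    G.lastV (h ++ [v]) = v := by
  simp [lastV]

theorem lastV_append_congr {P V : Type} (G : ReachGame P V) (x y d : List V)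
    (h : G.lastV x = G.lastV y) : G.lastV (x ++ d) = G.lastV (y ++ d) := by
  induction d using List.reverseRecOn with
  | nil => simpa using h
  | append_singleton d v _ =>
    rw [← List.append_assoc, ← List.append_assoc, lastV_concat, lastV_concat]

theorem outHist_prefix {P V : Type} (G : ReachGame P V) (A : P → List V → V) (m k : ℕ) :
    G.outHist A m <+: G.outHist A (m + k) := by
  induction k with
  | zero => simp
  | succ k ih => exact ih.trans (by rw [← add_assoc]; exact List.prefix_append _ _)

theorem outHist_getD {P V : Type} (G : ReachGame P V) (A : P → List V → V) (n k : ℕ)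
    (h : k ≤ n) : (G.outHist A n).getD k G.v0 = G.outcome A k := by
  induction n with
  | zero =>
    obtain rfl : k = 0 := by omega
    simp [outHist, outcome, lastV]
  | succ n ih =>
    rcases Nat.lt_or_ge n k with h1 | h1
    · obtain rfl : k = n + 1 := by omega
      rw [outcome, outHist, lastV_concat, List.getD_append_right _ _ _ _
        (by rw [outHist_length])]
      simp [outHist_length]
    · rw [outHist, List.getD_append _ _ _ _ (by rw [outHist_length]; omega)]
      exact ih h1

theorem outHist_eq {P V : Type} (G : ReachGame P V) (A : P → List V → V) (l : List V)
    (n : ℕ) (hl : l.length = n + 1) (h : ∀ k ≤ n, G.outcome A k = l.getD k G.v0) :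
    G.outHist A n = l := by
  apply List.ext_getElem
  · rw [outHist_length, hl]
  · intro k h1 h2
    have h3 := h k (by omega)
    rw [← G.outHist_getD A n k (by omega)] at h3
    rwa [List.getD_eq_getElem _ _ h1, List.getD_eq_getElem _ _ h2] at h3

theorem outHist_agree {P V : Type} (G : ReachGame P V) (A B : P → List V → V) (n : ℕ)
    (h : ∀ m < n, ∀ i, A i (G.outHist A m) = B i (G.outHist A m)) :
    G.outHist A n = G.outHist B n := by
  induction n with
  | zero => rfl
  | succ n ih =>
    have e := ih (fun m hm => h m (by omega))
    simp only [outHist]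
    rw [← e, h n (by omega)]

theorem outHist_shift {P V : Type} (G : ReachGame P V) (A B : P → List V → V) (a b : ℕ)
    (x y : List V) (hx : G.outHist A a = x) (hy : G.outHist B b = y)
    (hl : G.lastV x = G.lastV y) (h : ∀ i d, A i (x ++ d) = B i (y ++ d)) (k : ℕ) :
    ∃ d, G.outHist A (a + k) = x ++ d ∧ G.outHist B (b + k) = y ++ d := by
  induction k with
  | zero => exact ⟨[], by simp [hx, hy]⟩
  | succ k ih =>
    obtain ⟨d, h1, h2⟩ := ih
    refine ⟨d ++ [A (G.owner (G.lastV (x ++ d))) (x ++ d)], ?_, ?_⟩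
    · rw [← add_assoc, outHist, h1, List.append_assoc]
    · rw [← add_assoc, outHist, h2, List.append_assoc, h,
        G.lastV_append_congr x y d hl]

theorem outcome_shift {P V : Type} (G : ReachGame P V) (A B : P → List V → V) (a b : ℕ)
    (x y : List V) (hx : G.outHist A a = x) (hy : G.outHist B b = y)
    (hl : G.lastV x = G.lastV y) (h : ∀ i d, A i (x ++ d) = B i (y ++ d)) (k : ℕ) :
    G.outcome A (a + k) = G.outcome B (b + k) := by
  obtain ⟨d, h1, h2⟩ := G.outHist_shift A B a b x y hx hy hl h k
  rw [outcome, outcome, h1, h2, G.lastV_append_congr x y d hl]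

theorem isHistory_concat {P V : Type} (G : ReachGame P V) (x : List V) (v : V) (hx : x ≠ []) :
    G.IsHistory (x ++ [v]) ↔ G.IsHistory x ∧ G.E (G.lastV x) v := by
  obtain ⟨y, w, rfl⟩ : ∃ y w, x = y ++ [w] :=
    ⟨x.dropLast, x.getLast hx, (List.dropLast_append_getLast hx).symm⟩
  unfold IsHistory
  rw [lastV_concat, List.head?_append_of_ne_nil _ hx]
  have : List.IsChain G.E (y ++ [w] ++ [v]) ↔ List.IsChain G.E (y ++ [w]) ∧ G.E w v := by
    rw [List.isChain_append]
    simp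
  unfold List.Chain'
  rw [this]
  simp
  tauto

theorem isHistory_swap {P V : Type} (G : ReachGame P V) (x y d : List V) (hx : x ≠ [])
    (hy : G.IsHistory y) (hl : G.lastV x = G.lastV y) (h : G.IsHistory (x ++ d)) :
    G.IsHistory (y ++ d) := by
  induction d using List.reverseRecOn with
  | nil => simpa using hy
  | append_singleton d v ih =>
    have hy0 := hy.1
    rw [← List.append_assoc, isHistory_concat _ _ _ (by simp [hx])] at h
    rw [← List.append_assoc, isHistory_concat _ _ _ (by simp [hy0])]
    exact ⟨ih h.1, by rw [← G.lastV_append_congr x y d hl]; exact h.2⟩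

theorem outHist_isHistory {P V : Type} (G : ReachGame P V) (A : P → List V → V)
    (hA : G.IsProfile A) (n : ℕ) : G.IsHistory (G.outHist A n) := by
  induction n with
  | zero => simp [outHist, IsHistory, List.Chain']
  | succ n ih =>
    rw [outHist, isHistory_concat _ _ _ (G.outHist_ne A n)]
    exact ⟨ih, hA _ _ ih rfl⟩

theorem cost_lt_iff {P V : Type} (G : ReachGame P V) (j : P) (r s : ℕ → V) :
    G.cost j r < G.cost j s ↔ ∃ l, r l ∈ G.goal j ∧ ∀ m ≤ l, s m ∉ G.goal j := by
  unfold cost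
  constructor
  · intro h
    obtain ⟨_, ⟨l, rfl, hl⟩, h2⟩ := sInf_lt_iff.1 h
    refine ⟨l, hl, fun m hm hs => ?_⟩
    have : sInf {n : ℕ∞ | ∃ l : ℕ, n = (l : ℕ∞) ∧ s l ∈ G.goal j} ≤ (m : ℕ∞) :=
      sInf_le ⟨m, rfl, hs⟩
    have h3 := lt_of_lt_of_le h2 this
    have : l < m := by exact_mod_cast h3
    omega
  · rintro ⟨l, hl, h⟩
    have h1 : sInf {n : ℕ∞ | ∃ l : ℕ, n = (l : ℕ∞) ∧ r l ∈ G.goal j} ≤ (l : ℕ∞) :=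
      sInf_le ⟨l, rfl, hl⟩
    have h2 : ((l + 1 : ℕ) : ℕ∞) ≤ sInf {n : ℕ∞ | ∃ l : ℕ, n = (l : ℕ∞) ∧ s l ∈ G.goal j} := by
      apply le_sInf
      rintro _ ⟨m, rfl, hm⟩
      have : l + 1 ≤ m := by
        by_contra hc
        exact h m (by omega) hm
      exact_mod_cast this
    refine lt_of_le_of_lt h1 (lt_of_lt_of_le ?_ h2)
    exact_mod_cast Nat.lt_succ_self l

open Classical in
/-- Play `f` after replacing the prefix `x` by `y`; off the prefix play `g`. -/
noncomputable def graft {V : Type} (x y : List V) (f g : List V → V) (h : List V) : V :=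
  if x <+: h then f (y ++ h.drop x.length) else g h

theorem graft_append {V : Type} (x y : List V) (f g : List V → V) (d : List V) :
    graft x y f g (x ++ d) = f (y ++ d) := by
  simp [graft]

theorem graft_not {V : Type} (x y : List V) (f g : List V → V) (h : List V)
    (hh : ¬ x <+: h) : graft x y f g h = g h := by
  simp [graft, hh]

theorem graft_short {V : Type} (x y : List V) (f g : List V → V) (h : List V)
    (hh : h.length < x.length) : graft x y f g h = g h :=
  graft_not x y f g h (fun hp => by have := hp.length_le; omega)

theorem graft_isStrategy {P V : Type} (G : ReachGame P V) (i : P) (x y : List V)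
    (f g : List V → V) (hx : x ≠ []) (hy : G.IsHistory y) (hl : G.lastV x = G.lastV y)
    (hf : G.IsStrategy i f) (hg : G.IsStrategy i g) : G.IsStrategy i (graft x y f g) := by
  intro h hh ho
  by_cases hp : x <+: h
  · obtain ⟨d, rfl⟩ := hp
    rw [graft_append]
    have e := G.lastV_append_congr x y d hl
    rw [e] at ho ⊢
    exact hf _ (G.isHistory_swap x y d hx hy hl hh) ho
  · rw [graft_not _ _ _ _ _ hp]
    exact hg h hh ho

end ReachGame

/-- Let `(σᵢ)` be a strategy profile with outcome `ρ = λλ'ρ̄`, where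
`λ'` is nonempty, `Visit(λ) = Visit(λλ')` and `last(λ) = last(λλ')`.  Then there is a
strategy profile `(τᵢ)` with outcome `λρ̄` such that whenever some player `j` has a
profitable deviation w.r.t. `(τᵢ)`, he also has a profitable deviation w.r.t. `(σᵢ)`. -/
theorem remove_cycle {P V : Type} [Fintype P] [DecidableEq P] [Fintype V]
    (G : ReachGame P V)
    (prof : P → List V → V) (hprof : G.IsProfile prof)
    (lam lam' : List V) (hlam : lam ≠ []) (hlam' : lam' ≠ [])
    (hpre : ∀ k : ℕ, k < (lam ++ lam').length →
      G.outcome prof k = (lam ++ lam').getD k G.v0)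
    (hvisit : G.visitL lam = G.visitL (lam ++ lam'))
    (hlast : lam.getLastD G.v0 = (lam ++ lam').getLastD G.v0) :
    ∃ τ : P → List V → V,
      G.IsProfile τ ∧
      (∀ k : ℕ, G.outcome τ k =
        if k < lam.length then G.outcome prof k
        else G.outcome prof (k + lam'.length)) ∧
      (∀ (j : P) (σ' : List V → V), G.IsStrategy j σ' →
        G.cost j (G.outcome (Function.update τ j σ')) < G.cost j (G.outcome τ) →
        ∃ σ'' : List V → V, G.IsStrategy j σ'' ∧
          G.cost j (G.outcome (Function.update prof j σ'')) <
            G.cost j (G.outcome prof)) := by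
  obtain ⟨a, ha⟩ : ∃ a, lam.length = a + 1 :=
    Nat.exists_eq_succ_of_ne_zero (by simpa using hlam)
  have hlen : (lam ++ lam').length = (a + lam'.length) + 1 := by simp [ha]; omega
  have hX : G.outHist prof a = lam := by
    apply G.outHist_eq _ _ _ ha
    intro k hk
    rw [hpre k (by omega), List.getD_append _ _ _ _ (by omega)]
  have hY : G.outHist prof (a + lam'.length) = lam ++ lam' := by
    apply G.outHist_eq _ _ _ hlen
    intro k hk
    exact hpre k (by omega)
  have hXh : G.IsHistory lam := hX ▸ G.outHist_isHistory prof hprof a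
  have hYh : G.IsHistory (lam ++ lam') := hY ▸ G.outHist_isHistory prof hprof _
  have hl : G.lastV lam = G.lastV (lam ++ lam') := hlast
  -- visits of the cycle already occur before it
  have hvis : ∀ (j : P) (m : ℕ), m ≤ a + lam'.length → G.outcome prof m ∈ G.goal j →
      ∃ m', m' ≤ a ∧ m' ≤ m ∧ G.outcome prof m' ∈ G.goal j := by
    intro j m hm hg
    rcases Nat.lt_or_ge a m with h1 | h1
    · have hj : j ∈ G.visitL (lam ++ lam') := by
        refine ⟨_, ?_, hg⟩
        rw [hpre m (by omega), List.getD_eq_getElem _ _ (by omega)]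
        exact List.getElem_mem _
      rw [← hvisit] at hj
      obtain ⟨v, hv, hvg⟩ := hj
      obtain ⟨m', hm', rfl⟩ := List.getElem_of_mem hv
      refine ⟨m', by omega, by omega, ?_⟩
      rw [← G.outHist_getD prof a m' (by omega), hX, List.getD_eq_getElem _ _ hm']
      exact hvg
    · exact ⟨m, h1, le_rfl, hg⟩
  let τ : P → List V → V := fun i =>
    ReachGame.graft lam (lam ++ lam') (prof i) (prof i)
  have hτout : ∀ k : ℕ, G.outcome τ k = if k < lam.length then G.outcome prof k
      else G.outcome prof (k + lam'.length) := by
    have hτX : G.outHist τ a = lam := by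
      rw [← hX]
      apply G.outHist_agree
      intro m hm i
      exact ReachGame.graft_short _ _ _ _ _ (by rw [G.outHist_length]; omega)
    intro k
    split_ifs with hk
    · rw [← G.outHist_getD τ a k (by omega), ← G.outHist_getD prof a k (by omega), hτX, hX]
    · obtain ⟨c, rfl⟩ : ∃ c, k = a + c := ⟨k - a, by omega⟩
      rw [G.outcome_shift τ prof a (a + lam'.length) _ _ hτX hY hl
        (fun i d => ReachGame.graft_append _ _ _ _ _) c]
      congr 1
      omega
  refine ⟨τ, fun i => G.graft_isStrategy i _ _ _ _ hlam hYh hl (hprof i) (hprof i), hτout, ?_⟩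
  intro j σ' hσ' hlt
  obtain ⟨l, hl1, hl2⟩ := (G.cost_lt_iff _ _ _).1 hlt
  by_cases hA : G.outHist (Function.update τ j σ') a = lam
  · -- the deviation follows `lam`
    refine ⟨ReachGame.graft (lam ++ lam') lam σ' (prof j),
      G.graft_isStrategy j _ _ _ _ (by simp [hlam]) hXh hl.symm hσ' (hprof j), ?_⟩
    set B := Function.update prof j (ReachGame.graft (lam ++ lam') lam σ' (prof j)) with hB
    have hBY : G.outHist B (a + lam'.length) = lam ++ lam' := by
      rw [← hY]
      symm
      apply G.outHist_agree
      intro m hm i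
      by_cases hi : i = j
      · subst hi
        rw [hB, Function.update_self, ReachGame.graft_short]
        rw [G.outHist_length]; omega
      · rw [hB, Function.update_of_ne hi]
    have hsh := G.outcome_shift (Function.update τ j σ') B a (a + lam'.length) _ _ hA hBY hl (by
      intro i d
      by_cases hi : i = j
      · subst hi
        rw [hB, Function.update_self, Function.update_self, ReachGame.graft_append]
      · rw [hB, Function.update_of_ne hi, Function.update_of_ne hi]
        exact ReachGame.graft_append _ _ _ _ _)
    have hal : a < l := by
      by_contra hc
      apply hl2 l le_rfl
      rw [hτout, if_pos (by omega), ← G.outHist_getD prof a l (by omega), hX, ← hA,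
        G.outHist_getD _ a l (by omega)]
      exact hl1
    rw [G.cost_lt_iff]
    refine ⟨l + lam'.length, ?_, ?_⟩
    · have := hsh (l - a)
      rw [show a + (l - a) = l by omega,
        show a + lam'.length + (l - a) = l + lam'.length by omega] at this
      rwa [← this]
    · intro m hm hg
      rcases Nat.lt_or_ge (a + lam'.length) m with h1 | h1
      · apply hl2 (m - lam'.length) (by omega)
        rw [hτout, if_neg (by omega), Nat.sub_add_cancel (by omega)]
        exact hg
      · obtain ⟨m', h2, h3, h4⟩ := hvis j m h1 hg
        apply hl2 m' (by omega)
        rw [hτout, if_pos (by omega)]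
        exact h4
  · -- the deviation leaves `lam`
    refine ⟨σ', hσ', ?_⟩
    have hnp : ∀ m, ¬ lam <+: G.outHist (Function.update τ j σ') m := by
      intro m hp
      have h1 := hp.length_le
      rw [G.outHist_length] at h1
      obtain ⟨c, rfl⟩ : ∃ c, m = a + c := ⟨m - a, by omega⟩
      have h2 := G.outHist_prefix (Function.update τ j σ') a c
      have h3 := List.prefix_of_prefix_length_le h2 hp (by rw [G.outHist_length]; omega)
      exact hA (h3.eq_of_length (by rw [G.outHist_length]; omega))
    have hag : ∀ n, G.outHist (Function.update τ j σ') n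
        = G.outHist (Function.update prof j σ') n := by
      intro n
      apply G.outHist_agree
      intro m _ i
      by_cases hi : i = j
      · subst hi
        rw [Function.update_self, Function.update_self]
      · rw [Function.update_of_ne hi, Function.update_of_ne hi]
        exact ReachGame.graft_not _ _ _ _ _ (hnp m)
    rw [G.cost_lt_iff]
    refine ⟨l, ?_, ?_⟩
    · rw [ReachGame.outcome, ← hag l]
      exact hl1
    · intro m hm hg
      rcases Nat.lt_or_ge (a + lam'.length) m with h1 | h1
      · apply hl2 (m - lam'.length) (by omega)
        rw [hτout, if_neg (by omega), Nat.sub_add_cancel (by omega)]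
        exact hg
      · obtain ⟨m', h2, h3, h4⟩ := hvis j m h1 hg
        apply hl2 m' (by omega)
        rw [hτout, if_pos (by omega)]
        exact h4
end
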